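/- arXiv:2510.07605 — 4 statements merged into one kernel-verified Lean document; each statement's English description precedes it below -/
import Mathlib

section
/- Let h ∈ M_n(ℂ) be positive semidefinite and let f : [0,∞) → ℝ be a continuous convex function. Then tr(f(h)) equals the maximum, over all finite resolutions of identity (p_1,…,p_k) in M_n(ℂ), of Σ_{i=1}^k f(α_i) · tr(p_i), where α_i = tr(p_i h)/tr(p_i). -/
open scoped Matrix ComplexOrder

/-!
Expand `h = ∑ j, λ j • q j` in rank-one spectral projections `q j`. For `p ≥ 0`, the numbers
`tr (p * q j)` are nonnegative with sum `tr p`, so `α = tr (p * h) / tr p` is the weighted mean of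
the eigenvalues `λ j` with weights `tr (p * q j)`, and Jensen's inequality gives
`f α * tr p ≤ ∑ j, f (λ j) * tr (p * q j)`. Summing over a resolution of identity replaces
`tr (p * q j)` by `tr (q j) = 1`. The resolution `q` itself attains equality.
-/

open Matrix Unitary

variable {𝕜 n ι κ : Type*} [RCLike 𝕜] [Fintype n] [Fintype ι] [Fintype κ]

section TraceJensen

/-- The number `α = tr(p h) / tr(p)` of the paper: the mean of `h` in the state proportional to
`p`. As a quotient of real numbers it is `0` when the real part of `tr(p)` vanishes. -/
noncomputable def traceMean (p h : Matrix n n 𝕜) : ℝ :=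
  RCLike.re (trace (p * h)) / RCLike.re (trace p)

variable {p : Matrix n n 𝕜} {q : κ → Matrix n n 𝕜}

theorem trace_mul_nonneg_of_posSemidef {a b : Matrix n n 𝕜} (ha : a.PosSemidef)
    (hb : b.PosSemidef) : 0 ≤ trace (a * b) := by
  classical
  open scoped MatrixOrder in
  obtain ⟨c, rfl⟩ := CStarAlgebra.nonneg_iff_eq_star_mul_self.mp hb.nonneg
  rw [star_eq_conjTranspose, ← Matrix.mul_assoc, trace_mul_cycle]
  exact (ha.mul_mul_conjTranspose_same c).trace_nonneg

theorem re_trace_pos_of_posSemidef (hp : p.PosSemidef) (hp0 : p ≠ 0) :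
    0 < RCLike.re (trace p) :=
  (RCLike.pos_iff.mp (hp.trace_nonneg.lt_of_ne' (hp.trace_eq_zero_iff.not.mpr hp0))).1

theorem re_trace_mul_sum_smul (l : κ → ℝ) :
    RCLike.re (trace (p * ∑ j, l j • q j)) = ∑ j, RCLike.re (trace (p * q j)) * l j := by
  simp [Matrix.mul_sum, trace_sum, RCLike.smul_re, mul_comm]

variable [DecidableEq n]

theorem sum_re_trace_mul (hq : ∑ j, q j = 1) (p : Matrix n n 𝕜) :
    ∑ j, RCLike.re (trace (p * q j)) = RCLike.re (trace p) := by
  rw [← map_sum, ← trace_sum, ← Matrix.mul_sum, hq, Matrix.mul_one]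

variable {s : Set ℝ} {f : ℝ → ℝ} {l : κ → ℝ}

theorem map_traceMean_mul_re_trace_le (hf : ConvexOn ℝ s f) (hp : p.PosSemidef) (hp0 : p ≠ 0)
    (hq : ∀ j, (q j).PosSemidef) (hq1 : ∑ j, q j = 1) (hl : ∀ j, l j ∈ s) :
    f (traceMean p (∑ j, l j • q j)) * RCLike.re (trace p) ≤
      ∑ j, f (l j) * RCLike.re (trace (p * q j)) := by
  have weight_sum := sum_re_trace_mul hq1 p
  have trace_pos := re_trace_pos_of_posSemidef hp hp0
  have jensen := hf.map_centerMass_le (t := Finset.univ) (p := l)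
    (fun j _ ↦ (RCLike.nonneg_iff.mp (trace_mul_nonneg_of_posSemidef hp (hq j))).1)
    (weight_sum ▸ trace_pos) (fun j _ ↦ hl j)
  rw [← le_div_iff₀ trace_pos, traceMean, re_trace_mul_sum_smul]
  simpa only [Finset.centerMass, weight_sum, smul_eq_mul, Function.comp_apply, inv_mul_eq_div,
    mul_comm (f _)] using jensen

theorem sum_map_traceMean_mul_re_trace_le {p : ι → Matrix n n 𝕜} (hf : ConvexOn ℝ s f)
    (hp : ∀ i, (p i).PosSemidef) (hp0 : ∀ i, p i ≠ 0) (hp1 : ∑ i, p i = 1)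
    (hq : ∀ j, (q j).PosSemidef) (hq1 : ∑ j, q j = 1) (hl : ∀ j, l j ∈ s) :
    ∑ i, f (traceMean (p i) (∑ j, l j • q j)) * RCLike.re (trace (p i)) ≤
      ∑ j, f (l j) * RCLike.re (trace (q j)) :=
  calc
    _ ≤ ∑ i, ∑ j, f (l j) * RCLike.re (trace (p i * q j)) :=
      Finset.sum_le_sum fun i _ ↦ map_traceMean_mul_re_trace_le hf (hp i) (hp0 i) hq hq1 hl
    _ = ∑ j, f (l j) * ∑ i, RCLike.re (trace (q j * p i)) := by
      simp_rw [Finset.mul_sum, trace_mul_comm (q _) (p _)]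
      exact Finset.sum_comm
    _ = _ := by simp_rw [sum_re_trace_mul hp1]

end TraceJensen

variable [DecidableEq n]

/-- A finite resolution of identity: nonzero, pairwise orthogonal orthogonal projections with
sum `1`. Idempotence, orthogonality and the sum are Mathlib's `CompleteOrthogonalIdempotents`. -/
structure IsResolutionOfIdentity (p : ι → Matrix n n 𝕜) : Prop
    extends CompleteOrthogonalIdempotents p where
  isHermitian : ∀ i, (p i).IsHermitian
  ne_zero : ∀ i, p i ≠ 0

namespace IsResolutionOfIdentity

variable {p : ι → Matrix n n 𝕜}

theorem posSemidef (hp : IsResolutionOfIdentity p) (i : ι) : (p i).PosSemidef := by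
  simpa only [(hp.isHermitian i).eq, (hp.idem i).eq] using posSemidef_conjTranspose_mul_self (p i)

theorem comp_equiv (hp : IsResolutionOfIdentity p) (e : κ ≃ ι) :
    IsResolutionOfIdentity (p ∘ e) where
  toCompleteOrthogonalIdempotents :=
    (CompleteOrthogonalIdempotents.equiv e).mpr hp.toCompleteOrthogonalIdempotents
  isHermitian k := hp.isHermitian (e k)
  ne_zero k := hp.ne_zero (e k)

end IsResolutionOfIdentity

theorem isResolutionOfIdentity_iff {p : ι → Matrix n n 𝕜} :
    IsResolutionOfIdentity p ↔ (∀ i, (p i).IsHermitian) ∧ (∀ i, p i * p i = p i) ∧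
      (∀ i, p i ≠ 0) ∧ (∀ i j, i ≠ j → p i * p j = 0) ∧ ∑ i, p i = 1 :=
  ⟨fun hp ↦ ⟨hp.isHermitian, hp.idem, hp.ne_zero, fun _ _ hij ↦ hp.ortho hij, hp.complete⟩,
    fun ⟨herm, idem, ne_zero, ortho, sum_eq⟩ ↦ ⟨⟨⟨idem, ortho⟩, sum_eq⟩, herm, ne_zero⟩⟩

theorem sum_smul_diagonal_single {R : Type*} [NonAssocSemiring R] (d : n → R) :
    ∑ i, d i • diagonal (Pi.single i 1) = diagonal d := by
  ext i j
  obtain rfl | hij := eq_or_ne i j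
  · simp [Matrix.sum_apply, Pi.single_apply]
  · simp [Matrix.sum_apply, hij]

section Eigenprojection

variable {h : Matrix n n 𝕜} (hh : h.IsHermitian)

/-- The rank-one orthogonal projection onto the line spanned by the `i`-th vector of the
eigenbasis that Mathlib chooses for `h`. It is encoded as the conjugate of a diagonal matrix unit
by the diagonalising unitary, so that its algebra can be transported along a star isomorphism. -/
noncomputable def eigenprojection (i : n) : Matrix n n 𝕜 :=
  conjStarAlgAut 𝕜 _ hh.eigenvectorUnitary (diagonal (Pi.single i 1))

theorem eigenprojection_isHermitian (i : n) : (eigenprojection hh i).IsHermitian := by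
  rw [IsHermitian, ← star_eq_conjTranspose, eigenprojection, ← map_star, star_eq_conjTranspose,
    diagonal_conjTranspose, Pi.star_single, star_one]

theorem trace_eigenprojection (i : n) : trace (eigenprojection hh i) = 1 := by
  rw [eigenprojection, trace_map', trace_diagonal, Finset.sum_pi_single']
  simp

theorem completeOrthogonalIdempotents_eigenprojection :
    CompleteOrthogonalIdempotents (eigenprojection hh) :=
  ((CompleteOrthogonalIdempotents.single fun _ : n ↦ 𝕜).map (diagonalRingHom n 𝕜)).map
    (conjStarAlgAut 𝕜 _ hh.eigenvectorUnitary : Matrix n n 𝕜 →+* Matrix n n 𝕜)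

theorem isResolutionOfIdentity_eigenprojection : IsResolutionOfIdentity (eigenprojection hh) where
  toCompleteOrthogonalIdempotents := completeOrthogonalIdempotents_eigenprojection hh
  isHermitian := eigenprojection_isHermitian hh
  ne_zero i hi := by simpa [hi] using trace_eigenprojection hh i

theorem sum_eigenvalues_smul_eigenprojection :
    ∑ i, hh.eigenvalues i • eigenprojection hh i = h := by
  conv_rhs => rw [hh.spectral_theorem, ← sum_smul_diagonal_single]
  simp only [map_sum, map_smul, RCLike.real_smul_eq_coe_smul (K := 𝕜), eigenprojection,
    Function.comp_apply]

theorem traceMean_eigenprojection (i : n) :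
    traceMean (eigenprojection hh i) h = hh.eigenvalues i := by
  have mul_eq := (isResolutionOfIdentity_eigenprojection hh).mul_eq
  have trace_mul : RCLike.re (trace (eigenprojection hh i * h)) = hh.eigenvalues i :=
    calc
      _ = ∑ j, RCLike.re (trace (eigenprojection hh i * eigenprojection hh j)) *
          hh.eigenvalues j := by
        rw [← re_trace_mul_sum_smul, sum_eigenvalues_smul_eigenprojection]
      _ = _ := by simp [mul_eq, apply_ite, trace_eigenprojection]
  simp [traceMean, trace_mul, trace_eigenprojection]

end Eigenprojection

theorem trace_convex_sup_resolutions_general {h : Matrix n n 𝕜} (hh : h.IsHermitian) {s : Set ℝ}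
    {f : ℝ → ℝ} (hf : ConvexOn ℝ s f) (hs : ∀ i, hh.eigenvalues i ∈ s) :
    IsGreatest
      {r : ℝ | ∃ (k : ℕ) (p : Fin k → Matrix n n 𝕜), IsResolutionOfIdentity p ∧
        r = ∑ i, f (traceMean (p i) h) * RCLike.re (trace (p i))}
      (∑ i, f (hh.eigenvalues i)) := by
  have hq := isResolutionOfIdentity_eigenprojection hh
  constructor
  · let e := (Fintype.equivFin n).symm
    refine ⟨Fintype.card n, eigenprojection hh ∘ e, hq.comp_equiv e, ?_⟩
    simp [traceMean_eigenprojection, trace_eigenprojection,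
      e.sum_comp fun i ↦ f (hh.eigenvalues i)]
  · rintro _ ⟨k, p, hp, rfl⟩
    simpa [sum_eigenvalues_smul_eigenprojection, trace_eigenprojection] using
      sum_map_traceMean_mul_re_trace_le hf hp.posSemidef hp.ne_zero hp.complete
        hq.posSemidef hq.complete hs

/-- Variational formula for `tr(f(h))`, `h ≥ 0` in `M_n(ℂ)`, `f` continuous convex on `[0,∞)`:
`tr(f(h))` is the maximum over all finite resolutions of identity `(p_1, …, p_k)` of
`Σ_i f(α_i) tr(p_i)` with `α_i = tr(p_i h)/tr(p_i)`.  Here `tr(f(h))` is expressed via the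
spectral functional calculus as the sum of `f` over the eigenvalues of `h`. -/
theorem trace_convex_sup_resolutions {n : ℕ}
    (h : Matrix (Fin n) (Fin n) ℂ) (hh : h.PosSemidef)
    (f : ℝ → ℝ) (hf_cont : ContinuousOn f (Set.Ici 0)) (hf_conv : ConvexOn ℝ (Set.Ici 0) f) :
    IsGreatest
      {r : ℝ | ∃ (k : ℕ) (p : Fin k → Matrix (Fin n) (Fin n) ℂ),
        (∀ i, (p i).IsHermitian) ∧ (∀ i, p i * p i = p i) ∧ (∀ i, p i ≠ 0) ∧
        (∀ i j, i ≠ j → p i * p j = 0) ∧ (∑ i, p i = 1) ∧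
        r = ∑ i, f ((Matrix.trace (p i * h)).re / (Matrix.trace (p i)).re) *
              (Matrix.trace (p i)).re}
      (∑ i, f (hh.1.eigenvalues i)) := by
  simpa only [isResolutionOfIdentity_iff, and_assoc, traceMean, RCLike.re_eq_complex_re] using
    trace_convex_sup_resolutions_general hh.1 hf_conv hh.eigenvalues_nonneg
end

section
/- Let (X, 𝒜, μ) be a measure space with μ σ-finite, and let ρ : X → [0,∞) be measurable with ∫ ρ dμ = 1 and ρ log ρ ∈ L¹(μ) (convention 0·log 0 = 0). Then ∫ ρ log ρ dμ = sup over all measurable functions h : X → ℝ such that ρh ∈ L¹(μ) and e^h ∈ L¹(μ) of the quantity ∫ ρ h dμ − log ∫ e^h dμ. (This is the commutative instance, for the semifinite von Neumann algebra L^∞(μ) with trace ∫ · dμ, of the variational formula for Segal entropy over self-adjoint operators affiliated with the algebra.) -/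
/-!
Fenchel–Young duality for the exponential, `a t ≤ a log a + exp t - a`, drives both inequalities.

Upper bound: with `a = ρ x`, `t = h x + c` and an integration, the best constant `c`, the one that
gives `exp (h + c)` the same mass as `ρ`, produces Gibbs' inequality.

Optimality: the maximizer `h = log ρ` is not real-valued where `ρ` vanishes. On a σ-finite space
there is an everywhere positive `g` of arbitrarily small integral, and `h = log (ρ + g)` is
admissible; it loses at most `∫ g` because `a log a ≤ a log (a + b) ≤ a log a + b`.
-/

open MeasureTheory

section Pointwise

variable {a b : ℝ}

theorem mul_le_mul_log_add_exp_sub_self (ha : 0 ≤ a) (t : ℝ) :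
    a * t ≤ a * Real.log a + Real.exp t - a := by
  rcases ha.eq_or_lt with rfl | ha_pos
  · simpa using Real.exp_nonneg t
  · have exp_shift : a * Real.exp (t - Real.log a) = Real.exp t := by
      rw [Real.exp_sub, Real.exp_log ha_pos, mul_div_cancel₀ _ ha_pos.ne']
    have tangent_line := mul_le_mul_of_nonneg_left (Real.add_one_le_exp (t - Real.log a)) ha
    rw [exp_shift] at tangent_line
    linarith

theorem mul_log_le_mul_log_add (ha : 0 ≤ a) (hb : 0 ≤ b) :
    a * Real.log a ≤ a * Real.log (a + b) := by
  rcases ha.eq_or_lt with rfl | ha_pos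
  · simp
  · gcongr
    linarith

theorem mul_log_add_le (ha : 0 ≤ a) (hb : 0 ≤ b) :
    a * Real.log (a + b) ≤ a * Real.log a + b := by
  rcases ha.eq_or_lt with rfl | ha_pos
  · simpa using hb
  · have young := mul_le_mul_log_add_exp_sub_self ha (Real.log (a + b))
    rw [Real.exp_log (by positivity)] at young
    linarith

end Pointwise

section Entropy

variable {X : Type*} [MeasurableSpace X] {μ : Measure X} {ρ g h : X → ℝ}

theorem integral_mul_le_integral_mul_log_add_integral_exp_sub (hρ_nonneg : 0 ≤ᵐ[μ] ρ)
    (hρ : Integrable ρ μ) (hent : Integrable (fun x => ρ x * Real.log (ρ x)) μ)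
    (hρh : Integrable (fun x => ρ x * h x) μ) (hexp : Integrable (fun x => Real.exp (h x)) μ) :
    ∫ x, ρ x * h x ∂μ ≤
      ∫ x, ρ x * Real.log (ρ x) ∂μ + ∫ x, Real.exp (h x) ∂μ - ∫ x, ρ x ∂μ := by
  rw [← integral_add hent hexp, ← integral_sub (by exact hent.add hexp) hρ]
  refine integral_mono_ae hρh ((hent.add hexp).sub hρ) ?_
  filter_upwards [hρ_nonneg] with x hx
  exact mul_le_mul_log_add_exp_sub_self hx (h x)

theorem integral_mul_sub_mul_log_integral_exp_le (hρ_nonneg : 0 ≤ᵐ[μ] ρ)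
    (hρ_pos : 0 < ∫ x, ρ x ∂μ) (hent : Integrable (fun x => ρ x * Real.log (ρ x)) μ)
    (hρh : Integrable (fun x => ρ x * h x) μ) (hexp : Integrable (fun x => Real.exp (h x)) μ) :
    ∫ x, ρ x * h x ∂μ - (∫ x, ρ x ∂μ) * Real.log (∫ x, Real.exp (h x) ∂μ) ≤
      ∫ x, ρ x * Real.log (ρ x) ∂μ - (∫ x, ρ x ∂μ) * Real.log (∫ x, ρ x ∂μ) := by
  have hρ : Integrable ρ μ := .of_integral_ne_zero hρ_pos.ne'
  have : NeZero μ := ⟨by rintro rfl; simp at hρ_pos⟩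
  set m := ∫ x, ρ x ∂μ
  set Z := ∫ x, Real.exp (h x) ∂μ
  have hZ : 0 < Z := integral_exp_pos hexp
  set c := Real.log m - Real.log Z with hc
  have mul_shift (x : X) : ρ x * (h x + c) = ρ x * h x + ρ x * c := mul_add ..
  have exp_shift (x : X) : Real.exp (h x + c) = Real.exp (h x) * (m / Z) := by
    rw [Real.exp_add, hc, Real.exp_sub, Real.exp_log hρ_pos, Real.exp_log hZ]
  have shifted_bound := integral_mul_le_integral_mul_log_add_integral_exp_sub
    (h := fun x => h x + c) hρ_nonneg hρ hent
    (by simp only [mul_shift]; exact hρh.add (hρ.mul_const c))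
    (by simp only [exp_shift]; exact hexp.mul_const (m / Z))
  simp only [mul_shift, exp_shift] at shifted_bound
  rw [integral_add hρh (hρ.mul_const c), integral_mul_const, integral_mul_const,
    mul_div_cancel₀ _ hZ.ne'] at shifted_bound
  linarith

theorem integrable_mul_log_add (hρ_nonneg : 0 ≤ᵐ[μ] ρ) (hg_nonneg : 0 ≤ᵐ[μ] g)
    (hρ : AEMeasurable ρ μ) (hent : Integrable (fun x => ρ x * Real.log (ρ x)) μ)
    (hg : Integrable g μ) : Integrable (fun x => ρ x * Real.log (ρ x + g x)) μ := by
  refine integrable_of_le_of_le (hρ.mul (hρ.add hg.aemeasurable).log).aestronglyMeasurable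
    ?_ ?_ hent (hent.add hg)
  · filter_upwards [hρ_nonneg, hg_nonneg] with x hρx hgx using mul_log_le_mul_log_add hρx hgx
  · filter_upwards [hρ_nonneg, hg_nonneg] with x hρx hgx using mul_log_add_le hρx hgx

theorem exists_measurable_pos_integrable_integral_lt (μ : Measure X) [SigmaFinite μ] {ε : ℝ}
    (hε : 0 < ε) :
    ∃ g : X → ℝ, Measurable g ∧ (∀ x, 0 < g x) ∧ Integrable g μ ∧ ∫ x, g x ∂μ < ε := by
  obtain ⟨g, hg_pos, hg_meas, hg_lt⟩ :=
    exists_pos_lintegral_lt_of_sigmaFinite μ (ENNReal.ofReal_pos.2 hε).ne'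
  have hg_int : Integrable (fun x => (g x : ℝ)) μ :=
    integrable_toReal_of_lintegral_ne_top hg_meas.coe_nnreal_ennreal.aemeasurable hg_lt.ne_top
  refine ⟨fun x => g x, hg_meas.coe_nnreal_real, hg_pos, hg_int, ?_⟩
  rw [lintegral_coe_eq_integral g hg_int] at hg_lt
  exact (ENNReal.ofReal_lt_ofReal_iff hε).1 hg_lt

theorem exists_measurable_integral_exp_lt [SigmaFinite μ] (hρ_nonneg : 0 ≤ᵐ[μ] ρ)
    (hρ : Integrable ρ μ) (hent : Integrable (fun x => ρ x * Real.log (ρ x)) μ) {ε : ℝ}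
    (hε : 0 < ε) :
    ∃ h : X → ℝ, Measurable h ∧ Integrable (fun x => ρ x * h x) μ ∧
      Integrable (fun x => Real.exp (h x)) μ ∧
      ∫ x, ρ x * Real.log (ρ x) ∂μ ≤ ∫ x, ρ x * h x ∂μ ∧
      ∫ x, Real.exp (h x) ∂μ < ∫ x, ρ x ∂μ + ε := by
  obtain ⟨g, hg_meas, hg_pos, hg_int, hg_lt⟩ := exists_measurable_pos_integrable_integral_lt μ hε
  obtain ⟨ρ', hρ'_meas, hρ'_nonneg, hρ_eq⟩ := hρ.aemeasurable.exists_measurable_nonneg hρ_nonneg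
  have hg_nonneg : 0 ≤ᵐ[μ] g := .of_forall fun x => (hg_pos x).le
  have mul_log_ae : (fun x => ρ x * Real.log (ρ x + g x)) =ᵐ[μ]
      fun x => ρ x * Real.log (ρ' x + g x) := by
    filter_upwards [hρ_eq] with x hx
    rw [hx]
  have exp_log_ae : (fun x => ρ x + g x) =ᵐ[μ] fun x => Real.exp (Real.log (ρ' x + g x)) := by
    filter_upwards [hρ_eq] with x hx
    rw [hx, Real.exp_log (add_pos_of_nonneg_of_pos (hρ'_nonneg x) (hg_pos x))]
  have hmul := integrable_mul_log_add hρ_nonneg hg_nonneg hρ.aemeasurable hent hg_int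
  refine ⟨fun x => Real.log (ρ' x + g x), (hρ'_meas.add hg_meas).log, hmul.congr mul_log_ae,
    (hρ.add hg_int).congr exp_log_ae, ?_, ?_⟩
  · rw [← integral_congr_ae mul_log_ae]
    refine integral_mono_ae hent hmul ?_
    filter_upwards [hρ_nonneg] with x hx using mul_log_le_mul_log_add hx (hg_pos x).le
  · rw [← integral_congr_ae exp_log_ae, integral_add hρ hg_int]
    gcongr

theorem entropy_gibbs_variational_sigmaFinite_general [SigmaFinite μ] (hρ_nonneg : 0 ≤ᵐ[μ] ρ)
    (hρ_pos : 0 < ∫ x, ρ x ∂μ) (hent : Integrable (fun x => ρ x * Real.log (ρ x)) μ) :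
    IsLUB
      {r : ℝ | ∃ h : X → ℝ, Measurable h ∧
        Integrable (fun x => ρ x * h x) μ ∧ Integrable (fun x => Real.exp (h x)) μ ∧
        r = ∫ x, ρ x * h x ∂μ - (∫ x, ρ x ∂μ) * Real.log (∫ x, Real.exp (h x) ∂μ)}
      (∫ x, ρ x * Real.log (ρ x) ∂μ - (∫ x, ρ x ∂μ) * Real.log (∫ x, ρ x ∂μ)) := by
  have hρ : Integrable ρ μ := .of_integral_ne_zero hρ_pos.ne'
  have : NeZero μ := ⟨by rintro rfl; simp at hρ_pos⟩
  constructor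
  · rintro _ ⟨h, -, hρh, hexp, rfl⟩
    exact integral_mul_sub_mul_log_integral_exp_le hρ_nonneg hρ_pos hent hρh hexp
  · intro b hb
    refine le_of_forall_pos_le_add fun ε hε => ?_
    obtain ⟨h, hh_meas, hρh, hexp, le_integral_mul, integral_exp_lt⟩ :=
      exists_measurable_integral_exp_lt hρ_nonneg hρ hent hε
    have le_b := hb ⟨h, hh_meas, hρh, hexp, rfl⟩
    have mass_log_le :=
      mul_le_mul_log_add_exp_sub_self hρ_pos.le (Real.log (∫ x, Real.exp (h x) ∂μ))
    rw [Real.exp_log (integral_exp_pos hexp)] at mass_log_le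
    linarith

end Entropy

/-- Gibbs variational principle over a σ-finite measure space: if `ρ ≥ 0`, `∫ ρ dμ = 1` and
`ρ log ρ ∈ L¹(μ)` (with `0 log 0 = 0`, automatic since `Real.log 0 = 0`), then
`∫ ρ log ρ dμ = sup { ∫ ρ h dμ − log ∫ e^h dμ : h measurable, ρh ∈ L¹(μ), e^h ∈ L¹(μ) }`. -/
theorem entropy_gibbs_variational_sigmaFinite
    {X : Type*} [MeasurableSpace X] (μ : Measure X) [SigmaFinite μ]
    (ρ : X → ℝ) (hρ_meas : Measurable ρ) (hρ_nonneg : ∀ x, 0 ≤ ρ x)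
    (hρ_int : ∫ x, ρ x ∂μ = 1)
    (hent : Integrable (fun x => ρ x * Real.log (ρ x)) μ) :
    IsLUB
      {r : ℝ | ∃ h : X → ℝ, Measurable h ∧
        Integrable (fun x => ρ x * h x) μ ∧ Integrable (fun x => Real.exp (h x)) μ ∧
        r = ∫ x, ρ x * h x ∂μ - Real.log (∫ x, Real.exp (h x) ∂μ)}
      (∫ x, ρ x * Real.log (ρ x) ∂μ) := by
  simpa only [hρ_int, one_mul, Real.log_one, mul_zero, sub_zero] using
    entropy_gibbs_variational_sigmaFinite_general (.of_forall hρ_nonneg)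
      (hρ_int ▸ one_pos) hent
end

section
/- Let (X, 𝒜, μ) be a measure space with μ σ-finite, let g : X → [0,∞) be integrable, and let f : [0,∞) → ℝ be a continuous convex function with f(0) = 0 and f ∘ g ∈ L¹(μ). Then ∫ f ∘ g dμ = sup over all countable measurable partitions (A_i)_{i∈ℕ} of X into sets of finite measure of Σ_i f(α_i) μ(A_i), where α_i = μ(A_i)⁻¹ ∫_{A_i} g dμ and summands with μ(A_i) = 0 are taken to be 0. -/
open MeasureTheory

/-!
Jensen's inequality on each piece `A i` bounds every sum over a partition by `∫ f ∘ g`. For the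
converse, fix an integrable weight `w > 0` with `∫ w < ε` and cut `X` into pieces on each of which,
for some `δ > 0`, we have `w ≥ δ` and `g` takes its values in a closed convex set where `f`
oscillates by at most `δ`. The average of `g` over a piece `A` lies in that set, so
`∫_A f ∘ g ≤ f(α) μ(A) + δ μ(A) ≤ f(α) μ(A) + ∫_A w`; now sum over the pieces. The same
argument works for `g` with values in a closed convex subset of a Banach space.
-/

section Oscillation

theorem exists_mem_nhds_isClosed_convex_dist_le {E β : Type*} [SeminormedAddCommGroup E]
    [NormedSpace ℝ E] [PseudoMetricSpace β] {f : E → β} {s : Set E} {x : E}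
    (hf : ContinuousWithinAt f s x) {δ : ℝ} (hδ : 0 < δ) :
    ∃ U ∈ nhds x, IsClosed U ∧ Convex ℝ U ∧
      ∀ y ∈ s ∩ U, ∀ z ∈ s ∩ U, dist (f y) (f z) ≤ δ := by
  obtain ⟨r, hr, hfr⟩ := Metric.continuousWithinAt_iff.1 hf (δ / 2) (half_pos hδ)
  have close_to_center : ∀ y ∈ s ∩ Metric.closedBall x (r / 2), dist (f y) (f x) < δ / 2 :=
    fun y hy => hfr hy.1 ((Metric.mem_closedBall.1 hy.2).trans_lt (half_lt_self hr))
  refine ⟨_, Metric.closedBall_mem_nhds x (half_pos hr), Metric.isClosed_closedBall,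
    convex_closedBall _ _, fun y hy z hz => ?_⟩
  linarith [dist_triangle_right (f y) (f z) (f x), close_to_center y hy, close_to_center z hz]

theorem exists_seq_isClosed_convex_cover_dist_le {E β : Type*} [SeminormedAddCommGroup E]
    [NormedSpace ℝ E] [PseudoMetricSpace β] {f : E → β} {s t : Set E} (ht : IsLindelof t)
    (hf : ∀ x ∈ t, ContinuousWithinAt f s x) {δ : ℝ} (hδ : 0 < δ) :
    ∃ U : ℕ → Set E, t ⊆ ⋃ n, U n ∧ ∀ n, IsClosed (U n) ∧ Convex ℝ (U n) ∧
      ∀ y ∈ s ∩ U n, ∀ z ∈ s ∩ U n, dist (f y) (f z) ≤ δ := by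
  let 𝒰 : Set (Set E) :=
    {U | IsClosed U ∧ Convex ℝ U ∧ ∀ y ∈ s ∩ U, ∀ z ∈ s ∩ U, dist (f y) (f z) ≤ δ}
  have : Nonempty 𝒰 := ⟨∅, isClosed_empty, convex_empty, by simp⟩
  have hcover : t ⊆ ⋃ U : 𝒰, interior (U : Set E) := fun x hx => by
    obtain ⟨U, hxU, hU⟩ := exists_mem_nhds_isClosed_convex_dist_le (hf x hx) hδ
    exact Set.mem_iUnion.2 ⟨⟨U, hU⟩, mem_interior_iff_mem_nhds.2 hxU⟩
  obtain ⟨U, hU⟩ := ht.indexed_countable_subcover _ (fun _ => isOpen_interior) hcover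
  exact ⟨fun n => U n, hU.trans (Set.iUnion_mono fun _ => interior_subset), fun n => (U n).2⟩

end Oscillation

section Partition

variable {X : Type*} [MeasurableSpace X] {μ : Measure X}

/-- A measurable partition of the whole space into sets of finite measure, indexed by `ι`. Pieces
may be empty, so finite partitions are covered by `ι = ℕ`. -/
structure IsFiniteMeasurePartition {ι : Type*} (μ : Measure X) (A : ι → Set X) : Prop where
  measurableSet : ∀ i, MeasurableSet (A i)
  pairwise_disjoint : Pairwise (Function.onFun Disjoint A)
  iUnion_eq_univ : ⋃ i, A i = Set.univ
  measure_lt_top : ∀ i, μ (A i) < ⊤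

theorem isFiniteMeasurePartition_iff {ι : Type*} {A : ι → Set X} :
    IsFiniteMeasurePartition μ A ↔
      (∀ i, MeasurableSet (A i)) ∧ Pairwise (Function.onFun Disjoint A) ∧
        (⋃ i, A i) = Set.univ ∧ ∀ i, μ (A i) < ⊤ :=
  ⟨fun ⟨hm, hd, hu, hfin⟩ => ⟨hm, hd, hu, hfin⟩, fun ⟨hm, hd, hu, hfin⟩ => ⟨hm, hd, hu, hfin⟩⟩

theorem IsFiniteMeasurePartition.hasSum_setIntegral {ι E : Type*} [Countable ι]
    [NormedAddCommGroup E] [NormedSpace ℝ E] {A : ι → Set X} (hA : IsFiniteMeasurePartition μ A)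
    {u : X → E} (hu : Integrable u μ) :
    HasSum (fun i => ∫ x in A i, u x ∂μ) (∫ x, u x ∂μ) := by
  simpa [hA.iUnion_eq_univ] using
    hasSum_integral_iUnion hA.measurableSet hA.pairwise_disjoint hu.integrableOn

theorem exists_isFiniteMeasurePartition_of_ae_cover {ι : Type*} [Countable ι] [Nonempty ι]
    {C : ι → Set X} (hCm : ∀ i, MeasurableSet (C i)) (hCfin : ∀ i, μ (C i) < ⊤)
    (hC : ∀ᵐ x ∂μ, ∃ i, x ∈ C i) :
    ∃ A : ℕ → Set X, IsFiniteMeasurePartition μ A ∧ ∀ n, ∃ i, A n ≤ᵐ[μ] C i := by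
  obtain ⟨e, he⟩ := exists_surjective_nat ι
  let N : Set X := (⋃ i, C i)ᶜ
  let D : ℕ → Set X := fun n => C (e n) ∪ N
  have hN : μ N = 0 := by simpa [N, ae_iff, Set.compl_def] using hC
  have hDm : ∀ n, MeasurableSet (D n) := fun n =>
    (hCm _).union (MeasurableSet.iUnion hCm).compl
  have hAD : ∀ n, disjointed D n ≤ᵐ[μ] C (e n) := fun n =>
    (LE.le.eventuallyLE (disjointed_subset D n)).trans
      (union_ae_eq_left_of_ae_eq_empty (ae_eq_empty.2 hN)).le
  refine ⟨disjointed D, ⟨MeasurableSet.disjointed hDm, disjoint_disjointed D, ?_,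
    fun n => (measure_mono_ae (hAD n)).trans_lt (hCfin _)⟩, fun n => ⟨e n, hAD n⟩⟩
  rw [iUnion_disjointed, ← Set.iUnion_union, he.iUnion_comp C, Set.union_compl_self]

theorem exists_isFiniteMeasurePartition_ae_mem_dist_le {E β : Type*} [SeminormedAddCommGroup E]
    [NormedSpace ℝ E] [PseudoMetricSpace β] {f : E → β} {g : X → E} {s : Set E}
    (hfc : ContinuousOn f s) (hgs : ∀ᵐ x ∂μ, g x ∈ s) (hg : AEStronglyMeasurable g μ)
    {w : X → ℝ} (hw_pos : ∀ x, 0 < w x) (hw_meas : Measurable w) (hw : Integrable w μ) :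
    ∃ A : ℕ → Set X, IsFiniteMeasurePartition μ A ∧ ∀ n, ∃ (U : Set E) (δ : ℝ),
      IsClosed U ∧ Convex ℝ U ∧ (∀ y ∈ s ∩ U, ∀ z ∈ s ∩ U, dist (f y) (f z) ≤ δ) ∧
      ∀ᵐ x ∂μ.restrict (A n), g x ∈ U ∧ δ ≤ w x := by
  obtain ⟨t, ht, hgt⟩ := hg.isSeparable_ae_range
  have hst : IsLindelof (s ∩ t) := by
    have := (ht.mono Set.inter_subset_right : TopologicalSpace.IsSeparable (s ∩ t))
      |>.secondCountableTopology
    exact IsLindelof.of_coe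
  have hδ : ∀ k : ℕ, (0 : ℝ) < 1 / (k + 1) := fun k => Nat.one_div_pos_of_nat
  choose U hUcover hU using fun k => exists_seq_isClosed_convex_cover_dist_le hst
    (fun x hx => hfc x hx.1) (hδ k)
  borelize E
  obtain ⟨g', hg', hgg'⟩ := hg
  replace hg' : Measurable g' := hg'.measurable
  let C : ℕ × ℕ → Set X := fun p => g' ⁻¹' U p.1 p.2 ∩ {x | 1 / ((p.1 : ℝ) + 1) ≤ w x}
  have hC : ∀ᵐ x ∂μ, ∃ p, x ∈ C p := by
    filter_upwards [hgs, hgt, hgg'] with x hxs hxt hx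
    obtain ⟨k, hk⟩ := exists_nat_one_div_lt (hw_pos x)
    obtain ⟨n, hn⟩ := Set.mem_iUnion.1 (hUcover k ⟨hxs, hxt⟩)
    exact ⟨(k, n), by rwa [Set.mem_preimage, ← hx], hk.le⟩
  have hCm : ∀ p, MeasurableSet (C p) := fun p =>
    (hg' (hU p.1 p.2).1.measurableSet).inter (measurableSet_le measurable_const hw_meas)
  have hCfin : ∀ p, μ (C p) < ⊤ := fun p =>
    (measure_mono Set.inter_subset_right).trans_lt (hw.measure_ge_lt_top (hδ p.1))
  obtain ⟨A, hA, hAC⟩ := exists_isFiniteMeasurePartition_of_ae_cover hCm hCfin hC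
  refine ⟨A, hA, fun n => ?_⟩
  obtain ⟨⟨k, m⟩, hn⟩ := hAC n
  obtain ⟨hclosed, hconvex, hosc⟩ := hU k m
  refine ⟨U k m, _, hclosed, hconvex, hosc, ?_⟩
  rw [ae_restrict_iff' (hA.measurableSet n)]
  filter_upwards [hn, hgg'] with x hx hgx hxA
  exact ⟨hgx ▸ (hx hxA).1, (hx hxA).2⟩

end Partition

theorem exists_measurable_pos_integral_lt {X : Type*} [MeasurableSpace X] (μ : Measure X)
    [SigmaFinite μ] {ε : ℝ} (hε : 0 < ε) :
    ∃ w : X → ℝ, (∀ x, 0 < w x) ∧ Measurable w ∧ Integrable w μ ∧ ∫ x, w x ∂μ < ε := by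
  obtain ⟨w, hw_pos, hw_meas, hw_lt⟩ :=
    exists_pos_lintegral_lt_of_sigmaFinite μ (ENNReal.ofReal_pos.2 hε).ne'
  have hw_int : Integrable (fun x => (w x : ℝ)) μ := by
    refine ⟨hw_meas.coe_nnreal_real.aestronglyMeasurable, ?_⟩
    simpa [hasFiniteIntegral_iff_enorm] using hw_lt.trans ENNReal.ofReal_lt_top
  refine ⟨fun x => w x, hw_pos, hw_meas.coe_nnreal_real, hw_int, ?_⟩
  rwa [lintegral_coe_eq_integral w hw_int, ENNReal.ofReal_lt_ofReal_iff hε] at hw_lt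

section Jensen

variable {X E : Type*} [MeasurableSpace X] {μ : Measure X} [NormedAddCommGroup E] [NormedSpace ℝ E]
  [CompleteSpace E] {f : E → ℝ} {g : X → E} {s : Set E} {A : Set X}

theorem map_setAverage_mul_measureReal_le_setIntegral (hf : ConvexOn ℝ s f)
    (hfc : ContinuousOn f s) (hs : IsClosed s) (hA : μ A ≠ ⊤) (hgs : ∀ᵐ x ∂μ.restrict A, g x ∈ s)
    (hg : IntegrableOn g A μ) (hfg : IntegrableOn (fun x => f (g x)) A μ) :
    f (⨍ x in A, g x ∂μ) * μ.real A ≤ ∫ x in A, f (g x) ∂μ := by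
  rcases eq_or_ne (μ A) 0 with hA₀ | hA₀
  · simp [measureReal_def, hA₀, Measure.restrict_eq_zero.2 hA₀]
  calc f (⨍ x in A, g x ∂μ) * μ.real A
      ≤ (⨍ x in A, f (g x) ∂μ) * μ.real A :=
        mul_le_mul_of_nonneg_right (hf.map_set_average_le hfc hs hA₀ hA hgs hg hfg)
          measureReal_nonneg
    _ = ∫ x in A, f (g x) ∂μ := by
        rw [mul_comm, ← smul_eq_mul, measure_smul_setAverage _ hA]

theorem setIntegral_le_map_setAverage_add_mul_measureReal (hs : IsClosed s) (hsc : Convex ℝ s)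
    {δ : ℝ} (hfs : ∀ y ∈ s, ∀ z ∈ s, dist (f y) (f z) ≤ δ) (hA : μ A ≠ ⊤)
    (hgs : ∀ᵐ x ∂μ.restrict A, g x ∈ s)
    (hg : IntegrableOn g A μ) (hfg : IntegrableOn (fun x => f (g x)) A μ) :
    ∫ x in A, f (g x) ∂μ ≤ (f (⨍ x in A, g x ∂μ) + δ) * μ.real A := by
  rcases eq_or_ne (μ A) 0 with hA₀ | hA₀
  · simp [measureReal_def, hA₀, Measure.restrict_eq_zero.2 hA₀]
  have havg : ⨍ x in A, g x ∂μ ∈ s := hsc.set_average_mem hs hA₀ hA hgs hg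
  calc ∫ x in A, f (g x) ∂μ
      ≤ ∫ _ in A, f (⨍ x in A, g x ∂μ) + δ ∂μ := by
        refine setIntegral_mono_ae_restrict hfg (integrableOn_const hA) ?_
        filter_upwards [hgs] with x hx
        linarith [(abs_le.1 (hfs _ hx _ havg)).2]
    _ = (f (⨍ x in A, g x ∂μ) + δ) * μ.real A := by
        rw [setIntegral_const, smul_eq_mul, mul_comm]

theorem exists_isFiniteMeasurePartition_setIntegral_le (hfc : ContinuousOn f s)
    (hs : IsClosed s) (hsc : Convex ℝ s) (hgs : ∀ᵐ x ∂μ, g x ∈ s) (hg : Integrable g μ)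
    (hfg : Integrable (fun x => f (g x)) μ)
    {w : X → ℝ} (hw_pos : ∀ x, 0 < w x) (hw_meas : Measurable w) (hw : Integrable w μ) :
    ∃ A : ℕ → Set X, IsFiniteMeasurePartition μ A ∧ ∀ n,
      ∫ x in A n, f (g x) ∂μ ≤
        f (⨍ x in A n, g x ∂μ) * μ.real (A n) + ∫ x in A n, w x ∂μ := by
  obtain ⟨A, hA, hpiece⟩ :=
    exists_isFiniteMeasurePartition_ae_mem_dist_le hfc hgs hg.1 hw_pos hw_meas hw
  refine ⟨A, hA, fun n => ?_⟩
  obtain ⟨U, δ, hclosed, hconvex, hosc, hgw⟩ := hpiece n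
  have hgap : ∫ x in A n, f (g x) ∂μ ≤ (f (⨍ x in A n, g x ∂μ) + δ) * μ.real (A n) :=
    setIntegral_le_map_setAverage_add_mul_measureReal (hs.inter hclosed) (hsc.inter hconvex) hosc
      (hA.measure_lt_top n).ne ((ae_restrict_of_ae hgs).and (hgw.mono fun _ hx => hx.1))
      hg.integrableOn hfg.integrableOn
  have hweight : ∫ _ in A n, δ ∂μ ≤ ∫ x in A n, w x ∂μ :=
    setIntegral_mono_ae_restrict (integrableOn_const (hA.measure_lt_top n).ne) hw.integrableOn
      (hgw.mono fun _ hx => hx.2)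
  rw [setIntegral_const, smul_eq_mul] at hweight
  linarith

end Jensen

theorem hasSum_iff_summable_and_eq_tsum {ι M : Type*} [AddCommMonoid M] [TopologicalSpace M]
    [T2Space M] {a : ι → M} {m : M} : HasSum a m ↔ Summable a ∧ m = ∑' i, a i :=
  ⟨fun h => ⟨h.summable, h.tsum_eq.symm⟩, fun h => h.2 ▸ h.1.hasSum⟩

-- On a null piece `⨍` is the junk value `0`, possibly outside `s`; the factor `μ.real (A i) = 0`
-- removes that term.
theorem integral_convex_partition_variational_general
    {X E : Type*} [MeasurableSpace X] (μ : Measure X) [SigmaFinite μ]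
    [NormedAddCommGroup E] [NormedSpace ℝ E] [CompleteSpace E] {s : Set E} (hs : IsClosed s)
    {g : X → E} (hgs : ∀ᵐ x ∂μ, g x ∈ s) (hg : Integrable g μ)
    {f : E → ℝ} (hfc : ContinuousOn f s) (hf : ConvexOn ℝ s f)
    (hfg : Integrable (fun x => f (g x)) μ) :
    IsLUB {r : ℝ | ∃ A : ℕ → Set X, IsFiniteMeasurePartition μ A ∧
        HasSum (fun i => f (⨍ x in A i, g x ∂μ) * μ.real (A i)) r}
      (∫ x, f (g x) ∂μ) := by
  have jensen {A : ℕ → Set X} (hA : IsFiniteMeasurePartition μ A) (i : ℕ) :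
      f (⨍ x in A i, g x ∂μ) * μ.real (A i) ≤ ∫ x in A i, f (g x) ∂μ :=
    map_setAverage_mul_measureReal_le_setIntegral hf hfc hs (hA.measure_lt_top i).ne
      (ae_restrict_of_ae hgs) hg.integrableOn hfg.integrableOn
  constructor
  · rintro r ⟨A, hA, hr⟩
    exact hasSum_le (jensen hA) hr (hA.hasSum_setIntegral hfg)
  · refine fun b hb => le_of_forall_pos_le_add fun ε hε => ?_
    obtain ⟨w, hw_pos, hw_meas, hw, hwε⟩ := exists_measurable_pos_integral_lt μ hε
    obtain ⟨A, hA, hgap⟩ := exists_isFiniteMeasurePartition_setIntegral_le hfc hs hf.1 hgs hg hfg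
      hw_pos hw_meas hw
    have hfg_sum := hA.hasSum_setIntegral hfg
    have hw_sum := hA.hasSum_setIntegral hw
    have hsum : Summable fun i => f (⨍ x in A i, g x ∂μ) * μ.real (A i) := by
      simpa using hfg_sum.summable.sub <| hw_sum.summable.of_nonneg_of_le
        (fun i => sub_nonneg.2 (jensen hA i)) fun i => sub_le_iff_le_add'.2 (hgap i)
    have hle := hb ⟨A, hA, hsum.hasSum⟩
    linarith [hasSum_le hgap hfg_sum (hsum.hasSum.add hw_sum)]

/-- Variational formula over countable partitions (commutative, convex case): for σ-finite `μ`,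
`g ≥ 0` integrable and `f` continuous convex on `[0,∞)` with `f(0) = 0` and `f ∘ g ∈ L¹(μ)`,
`∫ f ∘ g dμ` is the supremum, over countable measurable partitions `(A_i)` of `X` into sets of
finite measure, of `Σ_i f(α_i) μ(A_i)` with `α_i = μ(A_i)⁻¹ ∫_{A_i} g dμ` (summands with
`μ(A_i) = 0` vanish automatically, as then `α_i = 0`, `f(0) = 0` and the factor `μ(A_i)` is 0). -/
theorem integral_convex_partition_variational
    {X : Type*} [MeasurableSpace X] (μ : Measure X) [SigmaFinite μ]
    (g : X → ℝ) (hg_nonneg : ∀ x, 0 ≤ g x) (hg_int : Integrable g μ)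
    (f : ℝ → ℝ) (hf_cont : ContinuousOn f (Set.Ici 0)) (hf_conv : ConvexOn ℝ (Set.Ici 0) f)
    (hf0 : f 0 = 0) (hfg_int : Integrable (fun x => f (g x)) μ) :
    IsLUB
      {r : ℝ | ∃ A : ℕ → Set X,
        (∀ i, MeasurableSet (A i)) ∧ Pairwise (Function.onFun Disjoint A) ∧
        (⋃ i, A i) = Set.univ ∧ (∀ i, μ (A i) < ⊤) ∧
        Summable (fun i =>
          f (((μ (A i)).toReal)⁻¹ * ∫ x in A i, g x ∂μ) * (μ (A i)).toReal) ∧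
        r = ∑' i, f (((μ (A i)).toReal)⁻¹ * ∫ x in A i, g x ∂μ) * (μ (A i)).toReal}
      (∫ x, f (g x) ∂μ) := by
  simpa [isFiniteMeasurePartition_iff, hasSum_iff_summable_and_eq_tsum, setAverage_eq,
    measureReal_def, and_assoc] using integral_convex_partition_variational_general μ isClosed_Ici
      (.of_forall hg_nonneg) hg_int hf_cont hf_conv hfg_int
end

section
/- Let (X, 𝒜, μ) be a measure space with μ finite, let g : X → [0,∞) be integrable, and let f : [0,∞) → ℝ be a continuous convex function with f ∘ g ∈ L¹(μ). Then ∫ f ∘ g dμ = sup over all FINITE measurable partitions (A_1,…,A_k) of X of Σ_{i=1}^k f(α_i) μ(A_i), where α_i = μ(A_i)⁻¹ ∫_{A_i} g dμ and summands with μ(A_i) = 0 are taken to be 0. (For finite algebras the countable resolutions of identity in the variational formula may be replaced by finite ones.) -/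
open MeasureTheory

/-!
A lower semicontinuous convex function `f` is the supremum of countably many continuous affine
functions `ℓ₀, ℓ₁, …`, and affine functions commute with averages. Hence every affine minorant `ℓ`
satisfies `ℓ (⨍ g) = ⨍ ℓ ∘ g ≤ ⨍ f ∘ g`, which gives Jensen's inequality; applied to each part of a
partition, it bounds all the sums by `∫ f ∘ g`. Conversely, split the space according to which of
`ℓ₀ ∘ g, …, ℓₙ ∘ g` is the largest. On each part the average of the maximum is the average of a
single `ℓᵢ ∘ g`, hence at most `f (⨍ g)`, so the sum for this partition is at least
`∫ max_{i ≤ n} ℓᵢ ∘ g`, which increases to `∫ f ∘ g` by monotone convergence.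
-/

open Filter Set Topology

section MeasurablePartition

variable {X ι : Type*} [MeasurableSpace X]

/-- A family of sets is a measurable partition if its members are measurable, pairwise disjoint and
cover the space. Members may be empty. -/
structure IsMeasurablePartition (A : ι → Set X) : Prop where
  measurableSet : ∀ i, MeasurableSet (A i)
  pairwise_disjoint : Pairwise (Function.onFun Disjoint A)
  iUnion_eq_univ : ⋃ i, A i = univ

theorem isMeasurablePartition_iff {A : ι → Set X} :
    IsMeasurablePartition A ↔ (∀ i, MeasurableSet (A i)) ∧
      Pairwise (Function.onFun Disjoint A) ∧ ⋃ i, A i = univ :=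
  ⟨fun hA ↦ ⟨hA.measurableSet, hA.pairwise_disjoint, hA.iUnion_eq_univ⟩,
    fun ⟨hmeas, hdisj, hcover⟩ ↦ ⟨hmeas, hdisj, hcover⟩⟩

theorem IsMeasurablePartition.integral_eq_sum [Fintype ι] {E : Type*} [NormedAddCommGroup E]
    [NormedSpace ℝ E] {μ : Measure X} {A : ι → Set X} (hA : IsMeasurablePartition A) {u : X → E}
    (hu : Integrable u μ) : ∫ x, u x ∂μ = ∑ i, ∫ x in A i, u x ∂μ := by
  rw [← setIntegral_univ, ← hA.iUnion_eq_univ]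
  exact integral_iUnion_fintype hA.measurableSet hA.pairwise_disjoint fun _ ↦ hu.integrableOn

theorem isMeasurablePartition_disjointed [LinearOrder ι] [LocallyFiniteOrderBot ι]
    {B : ι → Set X} (hB : ∀ i, MeasurableSet (B i)) (hcover : ⋃ i, B i = univ) :
    IsMeasurablePartition (disjointed B) where
  measurableSet i := disjointedRec (fun _ j ht ↦ ht.diff (hB j)) (hB i)
  pairwise_disjoint := disjoint_disjointed B
  iUnion_eq_univ := iUnion_disjointed.trans hcover

theorem exists_isMeasurablePartition_argmax [LinearOrder ι] [LocallyFiniteOrderBot ι] [Finite ι]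
    [Nonempty ι] {α : Type*} [TopologicalSpace α] [LinearOrder α] [OrderClosedTopology α]
    [SecondCountableTopology α] [MeasurableSpace α] [OpensMeasurableSpace α] {μ : Measure X}
    {u : ι → X → α} (hu : ∀ i, AEMeasurable (u i) μ) :
    ∃ A : ι → Set X, IsMeasurablePartition A ∧ ∀ᵐ x ∂μ, ∀ i, x ∈ A i → ∀ j, u j x ≤ u i x := by
  let v i := (hu i).mk (u i)
  let B i := {x | ∀ j, v j x ≤ v i x}
  have hB i : MeasurableSet (B i) := by
    simp only [B, ofPred_forall]
    exact .iInter fun j ↦ measurableSet_le (hu j).measurable_mk (hu i).measurable_mk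
  have hcover : ⋃ i, B i = univ :=
    eq_univ_of_forall fun x ↦ mem_iUnion.2 (Finite.exists_max fun i ↦ v i x)
  refine ⟨disjointed B, isMeasurablePartition_disjointed hB hcover, ?_⟩
  filter_upwards [ae_all_iff.2 fun i ↦ (hu i).ae_eq_mk] with x huv i hx j
  rw [huv i, huv j]
  exact disjointed_subset B i hx j

end MeasurablePartition

section PartialSups

variable {X : Type*} [MeasurableSpace X] {μ : Measure X}

theorem integrable_partialSups {ι : Type*} [Preorder ι] [LocallyFiniteOrderBot ι] {u : ι → X → ℝ}
    (hu : ∀ i, Integrable (u i) μ) (i : ι) : Integrable (partialSups u i) μ := by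
  rw [partialSups_apply]
  exact Finset.sup'_induction (p := (Integrable · μ)) _ u (fun _ hv _ hw ↦ hv.sup hw)
    fun j _ ↦ hu j

variable {u : ℕ → X → ℝ}

theorem tendsto_integral_partialSups {F : X → ℝ} (hu : ∀ i, Integrable (u i) μ)
    (hF : Integrable F μ) (hlub : ∀ᵐ x ∂μ, IsLUB (range fun i ↦ u i x) (F x)) :
    Tendsto (fun n ↦ ∫ x, partialSups u n x ∂μ) atTop (𝓝 (∫ x, F x ∂μ)) := by
  refine integral_tendsto_of_tendsto_of_monotone (integrable_partialSups hu) hF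
    (.of_forall fun x _ _ hmn ↦ partialSups_monotone u hmn x) ?_
  filter_upwards [hlub] with x hx
  simp only [Pi.partialSups_apply]
  refine tendsto_atTop_isLUB (partialSups_monotone _) ?_
  rwa [IsLUB, upperBounds_range_partialSups]

theorem exists_isMeasurablePartition_integral_partialSups (hu : ∀ i, Integrable (u i) μ) (n : ℕ) :
    ∃ A : Fin (n + 1) → Set X, IsMeasurablePartition A ∧
      ∫ x, partialSups u n x ∂μ = ∑ i, ∫ x in A i, u i x ∂μ := by
  obtain ⟨A, hA, hmax⟩ := exists_isMeasurablePartition_argmax (ι := Fin (n + 1)) (μ := μ)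
    (u := fun i ↦ u i) fun i ↦ (hu i).aemeasurable
  refine ⟨A, hA, (hA.integral_eq_sum (integrable_partialSups hu n)).trans <|
    Finset.sum_congr rfl fun i _ ↦ setIntegral_congr_ae (hA.measurableSet i) ?_⟩
  filter_upwards [hmax] with x hx hxi
  rw [Pi.partialSups_apply]
  exact le_antisymm
    (partialSups_le _ _ _ fun j hj ↦ hx i hxi ⟨j, Nat.lt_succ_of_le hj⟩)
    (le_partialSups_of_le (fun j ↦ u j x) (Nat.le_of_lt_succ i.2))

end PartialSups

section AffineMinorants

variable {E : Type*} [NormedAddCommGroup E] [NormedSpace ℝ E] {s : Set E} {f : E → ℝ}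

theorem exists_seq_affine_isLUB [HereditarilyLindelofSpace E] (hs : IsClosed s)
    (hf_lsc : LowerSemicontinuousOn f s) (hf_conv : ConvexOn ℝ s f) :
    ∃ (l : ℕ → E →L[ℝ] ℝ) (c : ℕ → ℝ), ∀ y ∈ s, IsLUB (range fun i ↦ l i y + c i) (f y) := by
  obtain ⟨l, c, hle, hsup⟩ := hf_conv.real_sSup_of_nat_affine_eq hs hf_lsc
  refine ⟨l, c, fun y hy ↦ ?_⟩
  have hsup_y : ⨆ i, (l i y + c i) = f y :=
    (iSup_apply ..).symm.trans (congrFun hsup ⟨y, hy⟩)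
  rw [← hsup_y]
  exact isLUB_ciSup ⟨f y, forall_mem_range.2 fun i ↦ hle i ⟨y, hy⟩⟩

variable [CompleteSpace E] {X : Type*} [MeasurableSpace X] {μ : Measure X} [IsFiniteMeasure μ]
  {g : X → E} {A : Set X}

theorem average_continuousLinearMap_add_const [NeZero μ] {F : Type*} [NormedAddCommGroup F]
    [NormedSpace ℝ F] [CompleteSpace F] (hg : Integrable g μ) (l : E →L[ℝ] F) (c : F) :
    ⨍ x, (l (g x) + c) ∂μ = l (⨍ x, g x ∂μ) + c := by
  have hg' := hg.to_average
  rw [average, integral_add (l.integrable_comp hg') (integrable_const c),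
    l.integral_comp_comm hg', integral_const, probReal_univ, one_smul, average]

theorem map_average_le_of_lowerSemicontinuousOn [NeZero μ] (hs : IsClosed s)
    (hf_lsc : LowerSemicontinuousOn f s) (hf_conv : ConvexOn ℝ s f) (hgs : ∀ᵐ x ∂μ, g x ∈ s)
    (hg : Integrable g μ) (hfg : Integrable (fun x ↦ f (g x)) μ) :
    f (⨍ x, g x ∂μ) ≤ ⨍ x, f (g x) ∂μ := by
  refine le_of_forall_lt_imp_le_of_dense fun a ha ↦ ?_
  obtain ⟨l, c, hle, rfl⟩ := hf_conv.exists_affine_le_of_lt (𝕜 := ℝ)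
    (hf_conv.1.average_mem hs hgs hg) ha hs hf_lsc
  calc l (⨍ x, g x ∂μ) + c = ⨍ x, (l (g x) + c) ∂μ :=
        (average_continuousLinearMap_add_const hg l c).symm
    _ ≤ ⨍ x, f (g x) ∂μ := by
        refine integral_mono_ae ((l.integrable_comp hg.to_average).add (integrable_const c))
          hfg.to_average (Measure.ae_mono' Measure.smul_absolutelyContinuous ?_)
        filter_upwards [hgs] with x hx using hle ⟨g x, hx⟩

theorem measureReal_mul_map_setAverage_le (hs : IsClosed s)
    (hf_lsc : LowerSemicontinuousOn f s) (hf_conv : ConvexOn ℝ s f) (hgs : ∀ᵐ x ∂μ, g x ∈ s)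
    (hg : Integrable g μ) (hfg : Integrable (fun x ↦ f (g x)) μ) :
    μ.real A * f (⨍ x in A, g x ∂μ) ≤ ∫ x in A, f (g x) ∂μ := by
  rw [← measure_smul_setAverage _ (measure_ne_top μ A), smul_eq_mul]
  rcases eq_zero_or_neZero (μ.restrict A) with hA | _
  · simp [measureReal_def, Measure.restrict_eq_zero.1 hA]
  · gcongr
    exact map_average_le_of_lowerSemicontinuousOn hs hf_lsc hf_conv (ae_restrict_of_ae hgs)
      hg.restrict hfg.restrict

theorem setIntegral_affine_le_measureReal_mul_map_setAverage (hs : IsClosed s)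
    (hs_conv : Convex ℝ s) {l : E →L[ℝ] ℝ} {c : ℝ} (hle : ∀ y ∈ s, l y + c ≤ f y)
    (hgs : ∀ᵐ x ∂μ, g x ∈ s) (hg : Integrable g μ) :
    ∫ x in A, (l (g x) + c) ∂μ ≤ μ.real A * f (⨍ x in A, g x ∂μ) := by
  rw [← measure_smul_setAverage _ (measure_ne_top μ A), smul_eq_mul]
  rcases eq_zero_or_neZero (μ.restrict A) with hA | _
  · simp [measureReal_def, Measure.restrict_eq_zero.1 hA]
  · rw [average_continuousLinearMap_add_const hg.restrict]
    gcongr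
    exact hle _ (hs_conv.average_mem hs (ae_restrict_of_ae hgs) hg.restrict)

end AffineMinorants

theorem integral_convex_finite_partition_variational_general
    {E : Type*} [NormedAddCommGroup E] [NormedSpace ℝ E] [CompleteSpace E]
    [HereditarilyLindelofSpace E] {X : Type*} [MeasurableSpace X] {μ : Measure X}
    [IsFiniteMeasure μ] {s : Set E} {f : E → ℝ} {g : X → E} (hs : IsClosed s)
    (hf_lsc : LowerSemicontinuousOn f s) (hf_conv : ConvexOn ℝ s f) (hgs : ∀ᵐ x ∂μ, g x ∈ s)
    (hg : Integrable g μ) (hfg : Integrable (fun x ↦ f (g x)) μ) :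
    IsLUB {r : ℝ | ∃ (k : ℕ) (A : Fin k → Set X), IsMeasurablePartition A ∧
        r = ∑ i, μ.real (A i) * f (⨍ x in A i, g x ∂μ)}
      (∫ x, f (g x) ∂μ) := by
  constructor
  · rintro _ ⟨k, A, hA, rfl⟩
    rw [hA.integral_eq_sum hfg]
    exact Finset.sum_le_sum fun i _ ↦
      measureReal_mul_map_setAverage_le hs hf_lsc hf_conv hgs hg hfg
  · intro b hb
    obtain ⟨l, c, hlub⟩ := exists_seq_affine_isLUB hs hf_lsc hf_conv
    have hint i : Integrable (fun x ↦ l i (g x) + c i) μ :=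
      ((l i).integrable_comp hg).add (integrable_const _)
    have htendsto := tendsto_integral_partialSups hint hfg (hgs.mono fun x ↦ hlub (g x))
    refine le_of_tendsto' htendsto fun n ↦ ?_
    obtain ⟨A, hA, hsum⟩ := exists_isMeasurablePartition_integral_partialSups hint n
    calc ∫ x, partialSups (fun i x ↦ l i (g x) + c i) n x ∂μ
        = ∑ i, ∫ x in A i, (l i (g x) + c i) ∂μ := hsum
      _ ≤ ∑ i, μ.real (A i) * f (⨍ x in A i, g x ∂μ) :=
          Finset.sum_le_sum fun i _ ↦ setIntegral_affine_le_measureReal_mul_map_setAverage hs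
            hf_conv.1 (fun y hy ↦ (hlub y hy).1 (mem_range_self _)) hgs hg
      _ ≤ b := hb ⟨n + 1, A, hA, rfl⟩

/-- Variational formula over finite partitions (finite measure, convex case): for a finite
measure `μ`, `g ≥ 0` integrable and `f` continuous convex on `[0,∞)` with `f ∘ g ∈ L¹(μ)`,
`∫ f ∘ g dμ` is the supremum, over finite measurable partitions `(A_1,…,A_k)` of `X`, of
`Σ_{i=1}^k f(α_i) μ(A_i)` with `α_i = μ(A_i)⁻¹ ∫_{A_i} g dμ` (summands with `μ(A_i) = 0`
vanish automatically since the factor `μ(A_i)` is 0). -/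
theorem integral_convex_finite_partition_variational
    {X : Type*} [MeasurableSpace X] (μ : Measure X) [IsFiniteMeasure μ]
    (g : X → ℝ) (hg_nonneg : ∀ x, 0 ≤ g x) (hg_int : Integrable g μ)
    (f : ℝ → ℝ) (hf_cont : ContinuousOn f (Set.Ici 0)) (hf_conv : ConvexOn ℝ (Set.Ici 0) f)
    (hfg_int : Integrable (fun x => f (g x)) μ) :
    IsLUB
      {r : ℝ | ∃ (k : ℕ) (A : Fin k → Set X),
        (∀ i, MeasurableSet (A i)) ∧ Pairwise (Function.onFun Disjoint A) ∧
        (⋃ i, A i) = Set.univ ∧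
        r = ∑ i, f (((μ (A i)).toReal)⁻¹ * ∫ x in A i, g x ∂μ) * (μ (A i)).toReal}
      (∫ x, f (g x) ∂μ) := by
  simpa only [isMeasurablePartition_iff, and_assoc, setAverage_eq, smul_eq_mul, measureReal_def,
    mul_comm (μ _).toReal] using integral_convex_finite_partition_variational_general isClosed_Ici
      hf_cont.lowerSemicontinuousOn hf_conv (.of_forall hg_nonneg) hg_int hfg_int
end
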